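/- With respect to the operation (p₀,y₀,t₀) ∘ (p,y,t) = (p√(p₀²+1) + p₀√(1+p²), y₀ + y√(p₀²+1) + p₀t, t₀ + t√(p₀²+1) + p₀y) on ℝ³, the element (0,0,0) is a two-sided identity and (p,y,t)⁻¹ = (-p, pt - y/√(p²+1) - p²y/√(p²+1), -t√(p²+1) + py) is a two-sided inverse of (p,y,t). -/

import Mathlib

noncomputable def lorentzMul (a b : ℝ × ℝ × ℝ) : ℝ × ℝ × ℝ :=
  (b.1 * Real.sqrt (a.1 ^ 2 + 1) + a.1 * Real.sqrt (1 + b.1 ^ 2),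
   a.2.1 + b.2.1 * Real.sqrt (a.1 ^ 2 + 1) + a.1 * b.2.2,
   a.2.2 + b.2.2 * Real.sqrt (a.1 ^ 2 + 1) + a.1 * b.2.1)

noncomputable def lorentzInv (z : ℝ × ℝ × ℝ) : ℝ × ℝ × ℝ :=
  (-z.1,
   z.1 * z.2.2 - z.2.1 / Real.sqrt (z.1 ^ 2 + 1) - z.1 ^ 2 * z.2.1 / Real.sqrt (z.1 ^ 2 + 1),
   -z.2.2 * Real.sqrt (z.1 ^ 2 + 1) + z.1 * z.2.1)

/-!
Write `γ = √(p ^ 2 + 1)` and let `B p` be the boost with matrix `!![γ, p; p, γ]`. The operation is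
the semidirect product law in which `p` acts on the pair `(y, t)` by `B p`, and
`(p, v)⁻¹ = (-p, -B (-p) v)`. Hence the left inverse law holds by cancellation, and the right one
says that `B p` inverts `B (-p)`, which is the relation `γ ^ 2 - p ^ 2 = 1`.
-/

/-- The Lorentz boost of the plane of pairs `(y, t)`, parametrized by `p = sinh θ` where `θ` is the
rapidity, so that `√(p ^ 2 + 1) = cosh θ`. It is the action of `p` in `lorentzMul`. -/
noncomputable def lorentzBoost (p : ℝ) : ℝ × ℝ →ₗ[ℝ] ℝ × ℝ :=
  √(p ^ 2 + 1) • LinearMap.id + p • (LinearEquiv.prodComm ℝ ℝ ℝ).toLinearMap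

theorem lorentzBoost_apply (p : ℝ) (v : ℝ × ℝ) :
    lorentzBoost p v = (√(p ^ 2 + 1) * v.1 + p * v.2, √(p ^ 2 + 1) * v.2 + p * v.1) :=
  rfl

theorem lorentzBoost_zero : lorentzBoost 0 = LinearMap.id := by
  simp [lorentzBoost]

theorem lorentzBoost_lorentzBoost_neg (p : ℝ) (v : ℝ × ℝ) :
    lorentzBoost p (lorentzBoost (-p) v) = v := by
  have gamma_sq : √(p ^ 2 + 1) ^ 2 = p ^ 2 + 1 := Real.sq_sqrt (by positivity)
  simp only [lorentzBoost_apply, neg_sq]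
  ext
  · linear_combination v.1 * gamma_sq
  · linear_combination v.2 * gamma_sq

theorem lorentzMul_eq_lorentzBoost (a b : ℝ × ℝ × ℝ) :
    lorentzMul a b =
      (b.1 * √(a.1 ^ 2 + 1) + a.1 * √(b.1 ^ 2 + 1), a.2 + lorentzBoost a.1 b.2) := by
  simp only [lorentzMul, lorentzBoost_apply, Prod.add_def, add_comm (1 : ℝ), add_assoc,
    mul_comm √(a.1 ^ 2 + 1)]

theorem lorentzInv_eq_lorentzBoost (z : ℝ × ℝ × ℝ) :
    lorentzInv z = (-z.1, -lorentzBoost (-z.1) z.2) := by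
  have div_gamma : (z.1 ^ 2 + 1) / √(z.1 ^ 2 + 1) = √(z.1 ^ 2 + 1) := Real.div_sqrt
  simp only [lorentzInv, lorentzBoost_apply, neg_sq, Prod.neg_mk]
  ext
  · rfl
  · linear_combination -z.2.1 * div_gamma
  · ring

theorem zero_lorentzMul (z : ℝ × ℝ × ℝ) : lorentzMul 0 z = z := by
  simp [lorentzMul_eq_lorentzBoost, lorentzBoost_zero]

theorem lorentzMul_zero (z : ℝ × ℝ × ℝ) : lorentzMul z 0 = z := by
  simp [lorentzMul_eq_lorentzBoost]

theorem lorentzInv_lorentzMul_cancel (z : ℝ × ℝ × ℝ) : lorentzMul (lorentzInv z) z = 0 := by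
  simp [lorentzInv_eq_lorentzBoost, lorentzMul_eq_lorentzBoost]

theorem lorentzMul_lorentzInv_cancel (z : ℝ × ℝ × ℝ) : lorentzMul z (lorentzInv z) = 0 := by
  simp [lorentzInv_eq_lorentzBoost, lorentzMul_eq_lorentzBoost, lorentzBoost_lorentzBoost_neg]

theorem lorentz_identity_and_inverse :
    (∀ z : ℝ × ℝ × ℝ, lorentzMul ((0 : ℝ), (0 : ℝ), (0 : ℝ)) z = z ∧
      lorentzMul z ((0 : ℝ), (0 : ℝ), (0 : ℝ)) = z) ∧
    (∀ z : ℝ × ℝ × ℝ, lorentzMul (lorentzInv z) z = ((0 : ℝ), (0 : ℝ), (0 : ℝ)) ∧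
      lorentzMul z (lorentzInv z) = ((0 : ℝ), (0 : ℝ), (0 : ℝ))) :=
  ⟨fun z => ⟨zero_lorentzMul z, lorentzMul_zero z⟩,
    fun z => ⟨lorentzInv_lorentzMul_cancel z, lorentzMul_lorentzInv_cancel z⟩⟩
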